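/- Let s ∈ ℝ with 2s ∉ ℤ, and define θ_i^{(s)} and ν_{i,j}^{(s)} as in the Padé Cholesky analysis (θ_0^{(s)}=1, θ_i^{(s)} = (1/i!)∏_{k=0}^{i-1}(s-k)/(2s-k); ν_{i,j}^{(s)} given by the explicit Pochhammer formulas, with ν_{i,j}^{(s)} = 0 when i > j or i ≢ j mod 2). Then for all positive integers p, q with p ≡ q+1 (mod 2): ∑_{i=1}^{max(p,q)+1} ν_{i,p}^{(s)} ν_{i,q+1}^{(s)} + ∑_{i=1}^{max(p,q)+1} ν_{i,p+1}^{(s)} ν_{i,q}^{(s)} = 2 θ_p^{(s)} θ_q^{(s)}. -/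

import Mathlib

/-- The rising factorial (Pochhammer symbol) `(x)_n = x (x+1) ⋯ (x+n-1)`. -/
noncomputable def risingFactorial (x : ℝ) (n : ℕ) : ℝ :=
  ∏ k ∈ Finset.range n, (x + k)

/-- `φ_n(s;p,q)`. -/
noncomputable def varphi (s : ℝ) (p q : ℕ) (n : ℕ) : ℝ :=
  (risingFactorial (s + 3 / 2 - p) n * risingFactorial (1 - p) n *
      risingFactorial (s + 1 / 2 - q) n * risingFactorial (-q) n) /
    (risingFactorial ((p : ℝ) - s + 1) n * risingFactorial ((p : ℝ) + 3 / 2) n *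
      risingFactorial ((q : ℝ) - s + 1) n * risingFactorial ((q : ℝ) + 3 / 2) n)

/-- `Φ_n(s;p,q)`. -/
noncomputable def Phi (s : ℝ) (p q : ℕ) (n : ℕ) : ℝ :=
  (((n : ℝ) + p - s) * (1 + 2 * p + 2 * n) * ((n : ℝ) + q - s) * (1 + 2 * q + 2 * n) /
      ((s - p) * (1 + 2 * p) * (s - q) * (1 + 2 * q))) * varphi s p q n

/-- `φ̃_n(s;p,q)` (denoted `ϕ_n` in the paper). -/
noncomputable def phiT (s : ℝ) (p q : ℕ) (n : ℕ) : ℝ :=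
  varphi s p q n *
    ((4 * (n : ℝ) + 3) * (1 + s - 2 * p) * ((q : ℝ) - n) * (1 + 2 * s + 2 * n - 2 * q) +
      (4 * (n : ℝ) + 1) * (s - 2 * q) * (1 + 2 * p + 2 * n) * (s - p - n)) /
    ((s - p) * (1 + 2 * p) * (s - q) * (1 + 2 * q))

/-- `θ_i^{(s)} = (1/i!) ∏_{k=0}^{i-1} (s-k)/(2s-k)`, with `θ_0^{(s)} = 1`. -/
noncomputable def theta (s : ℝ) (i : ℕ) : ℝ :=
  (1 / (Nat.factorial i : ℝ)) * ∏ k ∈ Finset.range i, (s - k) / (2 * s - k)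

/-- `ν_{2i,2j}^{(s)} = 2√(4i-1) (s+1/2-j)_i (-j)_i / ((j-s)_i (1/2+j)_i) θ_{2j}^{(s)}`. -/
noncomputable def nuEven (s : ℝ) (i j : ℕ) : ℝ :=
  2 * Real.sqrt (4 * (i : ℝ) - 1) *
    (risingFactorial (s + 1 / 2 - j) i * risingFactorial (-(j : ℝ)) i /
      (risingFactorial ((j : ℝ) - s) i * risingFactorial (1 / 2 + j) i)) *
    theta s (2 * j)

/-- `ν_{2i-1,2j-1}^{(s)} = 2√(4i-3) (s+3/2-j)_{i-1} (1-j)_{i-1} / ((j-s)_{i-1} (1/2+j)_{i-1}) θ_{2j-1}^{(s)}`. -/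
noncomputable def nuOdd (s : ℝ) (i j : ℕ) : ℝ :=
  2 * Real.sqrt (4 * (i : ℝ) - 3) *
    (risingFactorial (s + 3 / 2 - j) (i - 1) * risingFactorial (1 - (j : ℝ)) (i - 1) /
      (risingFactorial ((j : ℝ) - s) (i - 1) * risingFactorial (1 / 2 + j) (i - 1))) *
    theta s (2 * j - 1)


/-- General `ν_{i,j}^{(s)}`: given by the Pochhammer formulas when `i ≤ j` and
`i ≡ j (mod 2)`, and `0` otherwise. -/
noncomputable def nu (s : ℝ) (i j : ℕ) : ℝ :=
  if i ≤ j ∧ i % 2 = j % 2 then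
    (if i % 2 = 0 then nuEven s (i / 2) (j / 2) else nuOdd s ((i + 1) / 2) ((j + 1) / 2))
  else 0

/-!
Without its factor `2√(2i-1)`, `ν_{i,j}` becomes a coefficient `c_{i,j}` which satisfies one and the
same two-step recursion in `i` for both parities. Together with `c_{0,j} = c_{1,j} = θ_j` and the
ratio `θ_{j+1} / θ_j` it yields `2(2i+1) c_{i+1,j+1} = c_{i,j} - c_{i+2,j}`, which has the shape of
the Legendre relation `(2n+1) P_n = P'_{n+1} - P'_{n-1}`. Hence the `i`-th summand of the identity,
which lives in the first or the second sum according to the parity of `i`, is `2(U_{i-1} - U_i)`,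
where `U_i = c_{k,p} c_{l,q}` with `{k, l} = {i, i+1}`, `k ≡ p` and `l ≡ q (mod 2)`. The sum
telescopes to `2 U_0 = 2 θ_p θ_q`, because `c_{k,p} = 0` for `k > p`, `k ≡ p (mod 2)`.
-/

theorem risingFactorial_succ (x : ℝ) (n : ℕ) :
    risingFactorial x (n + 1) = risingFactorial x n * (x + n) :=
  Finset.prod_range_succ _ _

theorem risingFactorial_zero_left {n : ℕ} (hn : n ≠ 0) : risingFactorial 0 n = 0 :=
  Finset.prod_eq_zero (Finset.mem_range.mpr (Nat.pos_of_ne_zero hn)) (by simp)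

theorem theta_succ (s : ℝ) (j : ℕ) :
    theta s (j + 1) = (j - s) / ((j - 2 * s) * (j + 1)) * theta s j := by
  rw [← neg_sub s, ← neg_sub (2 * s), neg_mul, neg_div_neg_eq]
  simp only [theta, Finset.prod_range_succ, Nat.factorial_succ, Nat.cast_mul, Nat.cast_add_one,
    div_eq_mul_inv, mul_inv]
  ring

/-- The coefficient `ν_{i,j}` without its factor `2√(2i-1)`. The recursion preserves the parity of
`i`, and both parities start from `θ_j`; only the values with `i ≡ j (mod 2)` occur in `ν`. -/
noncomputable def nuReduced (s : ℝ) : ℕ → ℕ → ℝ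
  | 0, j => theta s j
  | 1, j => theta s j
  | i + 2, j =>
    (2 * s + 1 - j + i) * (i - j) / ((j - 2 * s + i) * (j + 1 + i)) * nuReduced s i j

theorem nuReduced_add_two (s : ℝ) (i j : ℕ) :
    nuReduced s (i + 2) j =
      (2 * s + 1 - j + i) * (i - j) / ((j - 2 * s + i) * (j + 1 + i)) * nuReduced s i j := rfl

theorem nuReduced_add_two_mul (s : ℝ) (i j n : ℕ) :
    nuReduced s (i + 2 * n) j =
      risingFactorial (s + (i + 1 - j) / 2) n * risingFactorial ((i - j) / 2) n /
        (risingFactorial ((i + j) / 2 - s) n * risingFactorial ((i + j + 1) / 2) n) *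
        nuReduced s i j := by
  induction n with
  | zero => simp [risingFactorial]
  | succ n ih =>
    have ratio_eq :
        (2 * s + 1 - j + (i + 2 * n : ℕ)) * ((i + 2 * n : ℕ) - j) /
            ((j - 2 * s + (i + 2 * n : ℕ)) * (j + 1 + (i + 2 * n : ℕ))) =
          (s + (i + 1 - j) / 2 + n) * ((i - j) / 2 + n) /
            (((i + j) / 2 - s + n) * ((i + j + 1) / 2 + n)) := by
      rw [← mul_div_mul_left _ (((i + j) / 2 - s + n) * _) (four_ne_zero (α := ℝ))]
      push_cast
      congr 1 <;> ring
    rw [mul_add_one, ← add_assoc, nuReduced_add_two, ratio_eq, ih]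
    simp only [risingFactorial_succ, div_eq_mul_inv, mul_inv]
    ring

theorem nuReduced_eq_zero_of_lt {s : ℝ} {i j : ℕ} (hlt : j < i) (hmod : i % 2 = j % 2) :
    nuReduced s i j = 0 := by
  obtain ⟨n, rfl⟩ : ∃ n, i = j + 2 * n := ⟨(i - j) / 2, by omega⟩
  rw [nuReduced_add_two_mul, sub_self, zero_div, risingFactorial_zero_left (by omega)]
  simp only [mul_zero, zero_div, zero_mul]

theorem nuEven_eq_nuReduced (s : ℝ) (n a : ℕ) :
    nuEven s n a = 2 * √(4 * n - 1) * nuReduced s (2 * n) (2 * a) := by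
  rw [← zero_add (2 * n), nuReduced_add_two_mul, nuEven, nuReduced]
  push_cast
  ring_nf

theorem nuOdd_succ_eq_nuReduced (s : ℝ) (n a : ℕ) :
    nuOdd s (n + 1) (a + 1) = 2 * √(4 * n + 1) * nuReduced s (2 * n + 1) (2 * a + 1) := by
  rw [add_comm (2 * n) 1, nuReduced_add_two_mul, nuOdd, nuReduced,
    show 2 * (a + 1) - 1 = 2 * a + 1 by omega, Nat.add_sub_cancel]
  push_cast
  ring_nf

theorem nu_of_mod_ne {s : ℝ} {i j : ℕ} (hmod : i % 2 ≠ j % 2) : nu s i j = 0 :=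
  if_neg fun hij => hmod hij.2

-- At `i = 0` both sides vanish, since `√(-1) = 0`.
theorem nu_of_mod_eq {s : ℝ} {i j : ℕ} (hmod : i % 2 = j % 2) :
    nu s i j = 2 * √(2 * i - 1) * nuReduced s i j := by
  rcases lt_or_ge j i with hlt | hle
  · rw [nuReduced_eq_zero_of_lt hlt hmod, mul_zero, nu, if_neg fun hij => hlt.not_ge hij.1]
  rw [nu, if_pos ⟨hle, hmod⟩]
  rcases Nat.even_or_odd' i with ⟨n, rfl | rfl⟩
  · obtain ⟨a, rfl⟩ : ∃ a, j = 2 * a := ⟨j / 2, by omega⟩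
    rw [if_pos (by omega), Nat.mul_div_cancel_left n two_pos, Nat.mul_div_cancel_left a two_pos,
      nuEven_eq_nuReduced]
    push_cast
    ring_nf
  · obtain ⟨a, rfl⟩ : ∃ a, j = 2 * a + 1 := ⟨j / 2, by omega⟩
    rw [if_neg (by omega), show (2 * n + 1 + 1) / 2 = n + 1 by omega,
      show (2 * a + 1 + 1) / 2 = a + 1 by omega, nuOdd_succ_eq_nuReduced]
    push_cast
    ring_nf

theorem nu_succ_mul_nu_succ {s : ℝ} {i j k : ℕ} (hj : (i + 1) % 2 = j % 2)
    (hk : (i + 1) % 2 = k % 2) :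
    nu s (i + 1) j * nu s (i + 1) k =
      4 * (2 * i + 1) * (nuReduced s (i + 1) j * nuReduced s (i + 1) k) := by
  have sq_weight : √(2 * (i + 1 : ℕ) - 1) * √(2 * (i + 1 : ℕ) - 1) = 2 * (i : ℝ) + 1 := by
    rw [Real.mul_self_sqrt] <;> push_cast <;> linarith [i.cast_nonneg (α := ℝ)]
  rw [nu_of_mod_eq hj, nu_of_mod_eq hk, ← sq_weight]
  ring

theorem sub_two_mul_add_ne_zero {s : ℝ} (hs : ∀ m : ℕ, 2 * s ≠ m) (i j : ℕ) :
    (j : ℝ) - 2 * s + i ≠ 0 :=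
  fun h => hs (j + i) (by push_cast; linarith)

theorem nuReduced_succ_succ {s : ℝ} (hs : ∀ m : ℕ, 2 * s ≠ m) (i j : ℕ) :
    nuReduced s (i + 1) (j + 1) = (j - s) / ((j - 2 * s + i) * (j + 1 + i)) * nuReduced s i j := by
  have hj : (j : ℝ) - 2 * s ≠ 0 := by simpa using sub_two_mul_add_ne_zero hs 0 j
  have hj_succ : (j : ℝ) + 1 ≠ 0 := j.cast_add_one_ne_zero
  induction i using Nat.twoStepInduction with
  | zero => simpa [nuReduced] using theta_succ s j
  | one =>
    have hden := sub_two_mul_add_ne_zero hs 1 j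
    have hden_succ := sub_two_mul_add_ne_zero hs 0 (j + 1)
    rw [nuReduced_add_two, nuReduced, nuReduced, theta_succ]
    push_cast at hden hden_succ ⊢
    field_simp
    ring
  | more i ih _ =>
    have hden := sub_two_mul_add_ne_zero hs i j
    have hden_add_two := sub_two_mul_add_ne_zero hs (i + 2) j
    have hden_succ := sub_two_mul_add_ne_zero hs (i + 1) (j + 1)
    rw [add_right_comm i 2 1, nuReduced_add_two, nuReduced_add_two, ih]
    push_cast at hden_add_two hden_succ ⊢
    field_simp
    ring

theorem nuReduced_sub_nuReduced_add_two {s : ℝ} (hs : ∀ m : ℕ, 2 * s ≠ m) (i j : ℕ) :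
    nuReduced s i j - nuReduced s (i + 2) j = 2 * (2 * i + 1) * nuReduced s (i + 1) (j + 1) := by
  have hden := sub_two_mul_add_ne_zero hs i j
  rw [nuReduced_succ_succ hs, nuReduced_add_two]
  field_simp
  ring

/-- The product `U_i` whose differences are the summands of the identity: of the indices `i` and
`i + 1`, each factor gets the one with the parity of its second index. The encoding by the parity of
`p` alone presupposes `p ≢ q (mod 2)`. -/
noncomputable def nuCross (s : ℝ) (p q i : ℕ) : ℝ :=
  if i % 2 = p % 2 then nuReduced s i p * nuReduced s (i + 1) q
  else nuReduced s (i + 1) p * nuReduced s i q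

theorem nuCross_zero (s : ℝ) (p q : ℕ) : nuCross s p q 0 = theta s p * theta s q :=
  ite_self _

theorem nuCross_eq_zero_of_lt {s : ℝ} {p i : ℕ} (q : ℕ) (hi : p < i) : nuCross s p q i = 0 := by
  unfold nuCross
  split_ifs with hmod
  · rw [nuReduced_eq_zero_of_lt hi hmod, zero_mul]
  · rw [nuReduced_eq_zero_of_lt (by omega) (by omega), zero_mul]

theorem nu_succ_mul_nu_add_nu_succ_mul_nu {s : ℝ} (hs : ∀ m : ℕ, 2 * s ≠ m) {p q : ℕ}
    (hpq : p % 2 ≠ q % 2) (i : ℕ) :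
    nu s (i + 1) p * nu s (i + 1) (q + 1) + nu s (i + 1) (p + 1) * nu s (i + 1) q =
      2 * (nuCross s p q i - nuCross s p q (i + 1)) := by
  by_cases hmod : i % 2 = p % 2
  · rw [nu_of_mod_ne (show (i + 1) % 2 ≠ p % 2 by omega), nu_succ_mul_nu_succ (by omega) (by omega),
      nuCross, if_pos hmod, nuCross, if_neg (by omega)]
    linear_combination -2 * nuReduced s (i + 1) q * nuReduced_sub_nuReduced_add_two hs i p
  · rw [nu_of_mod_ne (show (i + 1) % 2 ≠ q % 2 by omega), nu_succ_mul_nu_succ (by omega) (by omega),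
      nuCross, if_neg hmod, nuCross, if_pos (by omega)]
    linear_combination -2 * nuReduced s (i + 1) p * nuReduced_sub_nuReduced_add_two hs i q

theorem sum_nu_mul_nu_add_nu_mul_nu {s : ℝ} (hs : ∀ m : ℕ, 2 * s ≠ m) {p q : ℕ}
    (hpq : p % 2 ≠ q % 2) (n : ℕ) :
    ∑ i ∈ Finset.Icc 1 n, (nu s i p * nu s i (q + 1) + nu s i (p + 1) * nu s i q) =
      2 * (nuCross s p q 0 - nuCross s p q n) := by
  induction n with
  | zero => simp
  | succ n ih =>
    rw [Finset.sum_Icc_succ_top (by omega), ih, nu_succ_mul_nu_add_nu_succ_mul_nu hs hpq]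
    ring

theorem nu_sum_identity_general (s : ℝ) (hs : ∀ m : ℕ, 2 * s ≠ m) (p q : ℕ)
    (hpq : p % 2 ≠ q % 2) :
    (∑ i ∈ Finset.Icc 1 (max p q + 1), nu s i p * nu s i (q + 1)) +
      (∑ i ∈ Finset.Icc 1 (max p q + 1), nu s i (p + 1) * nu s i q) =
      2 * theta s p * theta s q := by
  rw [← Finset.sum_add_distrib, sum_nu_mul_nu_add_nu_mul_nu hs hpq, nuCross_zero,
    nuCross_eq_zero_of_lt q (by omega), sub_zero, mul_assoc]

/-- Lemma 5.8: for `p ≡ q+1 (mod 2)`,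
`∑_i ν_{i,p} ν_{i,q+1} + ∑_i ν_{i,p+1} ν_{i,q} = 2 θ_p θ_q`. -/
theorem nu_sum_identity (s : ℝ) (hs : ∀ m : ℤ, 2 * s ≠ (m : ℝ))
    (p q : ℕ) (hp : 0 < p) (hq : 0 < q) (hpq : p % 2 ≠ q % 2) :
    (∑ i ∈ Finset.Icc 1 (max p q + 1), nu s i p * nu s i (q + 1)) +
      (∑ i ∈ Finset.Icc 1 (max p q + 1), nu s i (p + 1) * nu s i q) =
      2 * theta s p * theta s q := by
  exact nu_sum_identity_general s (fun m => mod_cast hs m) p q hpq
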